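/- Let P ⊆ ℝ³ be a 3-dimensional reflexive polytope with respect to ℤ³. Then the lattice points of ℤ³ lying on the edges and vertices of P (the 1-skeleton of P) generate the full lattice ℤ³, i.e., Λ_1 = ℤ³. -/

import Mathlib

/-- The standard pairing `⟨x, y⟩ = ∑ i, x i * y i` on `ℝ^n`. -/
def dotProd {n : ℕ} (x y : Fin n → ℝ) : ℝ := ∑ i, x i * y i

/-- A point of `ℝ^n` is a lattice point if all its coordinates are integers. -/
def IsLatticePt {n : ℕ} (x : Fin n → ℝ) : Prop := ∀ i, ∃ m : ℤ, x i = (m : ℝ)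

/-- A lattice polytope is the convex hull of finitely many lattice points. -/
def IsLatticePolytope {n : ℕ} (P : Set (Fin n → ℝ)) : Prop :=
  ∃ V : Set (Fin n → ℝ), V.Finite ∧ (∀ x ∈ V, IsLatticePt x) ∧ P = convexHull ℝ V

/-- The dual polytope `P* = {y : ⟨x, y⟩ ≥ -1 for all x ∈ P}`. -/
def dualPolytope {n : ℕ} (P : Set (Fin n → ℝ)) : Set (Fin n → ℝ) :=
  {y | ∀ x ∈ P, -1 ≤ dotProd x y}

/-- A reflexive polytope: a lattice polytope containing `0` in its interior
(hence full-dimensional) whose dual is again a lattice polytope. -/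
def IsReflexive {n : ℕ} (P : Set (Fin n → ℝ)) : Prop :=
  IsLatticePolytope P ∧ (0 : Fin n → ℝ) ∈ interior P ∧ IsLatticePolytope (dualPolytope P)

/-- A face of a polytope (an exposed face). -/
def IsFaceOf {n : ℕ} (P F : Set (Fin n → ℝ)) : Prop := IsExposed ℝ P F

/-- A facet: a nonempty face of dimension `n - 1`. -/
def IsFacetOf {n : ℕ} (P F : Set (Fin n → ℝ)) : Prop :=
  IsFaceOf P F ∧ F.Nonempty ∧ Module.finrank ℝ ↥(vectorSpan ℝ F) = n - 1

/-- `Λ_k` : the subgroup of `ℝ^n` generated by all lattice points lying in faces of `P`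
of dimension at most `k` (the `k`-skeleton).  It is a subgroup of the lattice `ℤ^n`. -/
def skeletonLattice {n : ℕ} (P : Set (Fin n → ℝ)) (k : ℕ) : AddSubgroup (Fin n → ℝ) :=
  AddSubgroup.closure
    {x | IsLatticePt x ∧
      ∃ F : Set (Fin n → ℝ), IsFaceOf P F ∧ Module.finrank ℝ ↥(vectorSpan ℝ F) ≤ k ∧ x ∈ F}

/-- The lattice `ℤ^n`, as the subgroup of `ℝ^n` generated by (= consisting of) all
lattice points. -/
def latticeSubgroup (n : ℕ) : AddSubgroup (Fin n → ℝ) :=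
  AddSubgroup.closure {x | IsLatticePt x}

/-- `x` is a (Demazure) root of `P` with facet `F` and inner normal `η`:
`x` is a lattice point in the relative interior of the facet `F`, and `η` is the
lattice point with `⟨η, v⟩ = -1` for all `v ∈ F`. -/
def IsRoot {n : ℕ} (P : Set (Fin n → ℝ)) (x : Fin n → ℝ) (F : Set (Fin n → ℝ))
    (η : Fin n → ℝ) : Prop :=
  IsLatticePt x ∧ IsFacetOf P F ∧ x ∈ intrinsicInterior ℝ F ∧
    IsLatticePt η ∧ ∀ v ∈ F, dotProd η v = -1

/-!
By duality `P = {x | ⟨u, x⟩ ≥ -1 for all u ∈ U}` for a finite set `U` of integral normals. Let `Λ`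
be the group generated by the lattice points of the `1`-skeleton. A nonzero lattice point of `P`
is tight for some normal, and one that is tight for two normals lies on a ridge, so a lattice point
outside `Λ` is a root: it is tight for a single normal `η`, and nonnegative on all others.

*Lattice points of `P` lie in `Λ`.* Suppose that `x ∉ Λ` is a root for `η`. Adding `x` to a lattice
point moves it towards the facet of `η` without leaving `P`. Pushing a vertex this way produces a
second root `z ∉ Λ`, for some `μ`, with `⟨η, z⟩ = ⟨μ, x⟩ = 0`. The point `x + z` lies on the edge
`η = μ = -1`, and it is an interior point of that edge because every other normal is nonnegative
on it. Hence the edge contains two consecutive lattice points, and `{η = μ = 0} ∩ ℤ³ ⊆ Λ`.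

No lattice point `q` of `P` has `(⟨η, q⟩, ⟨μ, q⟩) = (1, 0)`. Indeed `k = q + x` would lie in `Λ`, so
`q ∉ Λ` would be a root for some `ν`, and translation by `q` keeps in `P` the end `v` of the edge at
which `ν` is positive. Then `v + q + x = v + k` overshoots the edge if `k ≠ 0`, whereas for `k = 0`
the point `v - x ∈ P` is still tight for two normals, which forces `x ∈ Λ`. On the other hand, as
`0` is interior to `P`, some lattice point `w` has `⟨η + μ, w⟩ > 0`, and from `w` one reaches a
point with values `(1, 0)` or `(0, 1)` by adding roots.

*Lattice points of `P` generate `ℤ³`.* Each `m ∈ ℤ³` is an integer multiple of a point of a facet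
`η = -1`, and so lies in the cone over a lattice simplex of that facet, with at most three vertices.
Remove the integral parts of its coefficients. The remaining ones have an integral sum smaller than
three: with sum `1` they describe a lattice point of the simplex, and with sum `2` the central
symmetry of the fundamental parallelepiped reduces to that case.
-/

section ConvexGeometry

open scoped Topology

variable {n : ℕ}

/-- The pairing with `g`, as a continuous linear functional. -/
noncomputable def dotProductCLM (g : Fin n → ℝ) : StrongDual ℝ (Fin n → ℝ) :=
  LinearMap.toContinuousLinearMap (dotProductBilin ℝ ℝ g)

@[simp]
lemma dotProductCLM_apply (g x : Fin n → ℝ) : dotProductCLM g x = g ⬝ᵥ x := rfl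

lemma exists_eq_dotProductCLM (f : StrongDual ℝ (Fin n → ℝ)) : ∃ g, f = dotProductCLM g := by
  refine ⟨fun i => f (fun j => if i = j then 1 else 0), ContinuousLinearMap.ext fun x => ?_⟩
  rw [dotProductCLM_apply, dotProduct_comm]
  exact f.toLinearMap.pi_apply_eq_sum_univ x

lemma convex_dotProduct_ge (g : Fin n → ℝ) (c : ℝ) : Convex ℝ {x | c ≤ g ⬝ᵥ x} :=
  convex_halfSpace_ge (dotProductCLM g).toLinearMap.isLinear c

lemma exists_mem_dotProduct_pos_of_zero_mem_interior {V : Set (Fin n → ℝ)}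
    (h0 : 0 ∈ interior (convexHull ℝ V)) {g : Fin n → ℝ} (hg : g ≠ 0) : ∃ v ∈ V, 0 < g ⬝ᵥ v := by
  by_contra! hV
  have hhull : convexHull ℝ V ⊆ {x | 0 ≤ -g ⬝ᵥ x} :=
    convexHull_min (fun v hv => by simpa using hV v hv) (convex_dotProduct_ge (-g) 0)
  have hlim : Filter.Tendsto (fun ε : ℝ => ε • g) (𝓝[>] 0) (𝓝 0) := by
    have hcont : Continuous fun ε : ℝ => ε • g := by fun_prop
    simpa using (hcont.tendsto 0).mono_left nhdsWithin_le_nhds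
  obtain ⟨ε, hmem, hε⟩ :=
    ((hlim.eventually (mem_interior_iff_mem_nhds.1 h0)).and self_mem_nhdsWithin).exists
  have hle : 0 ≤ -g ⬝ᵥ (ε • g) := hhull hmem
  have hpos : 0 < ε * (g ⬝ᵥ g) :=
    mul_pos hε (by simpa using Matrix.dotProduct_self_star_pos_iff.2 hg)
  rw [neg_dotProduct, dotProduct_smul, smul_eq_mul] at hle
  linarith

lemma dualPolytope_convexHull (V : Set (Fin n → ℝ)) :
    dualPolytope (convexHull ℝ V) = dualPolytope V := by
  ext y
  refine ⟨fun h x hx => h x (subset_convexHull ℝ V hx), fun h x hx => ?_⟩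
  have hV : V ⊆ {x | -1 ≤ y ⬝ᵥ x} := fun v hv => (h v hv).trans_eq (dotProduct_comm v y)
  exact (convexHull_min hV (convex_dotProduct_ge y (-1)) hx).trans_eq (dotProduct_comm y x)

lemma dualPolytope_dualPolytope {P : Set (Fin n → ℝ)} (hconv : Convex ℝ P) (hclosed : IsClosed P)
    (h0 : 0 ∈ P) : dualPolytope (dualPolytope P) = P := by
  refine Set.Subset.antisymm (fun x hx => ?_)
    fun x hx y hy => (hy x hx).trans_eq (dotProduct_comm x y)
  by_contra hxP
  obtain ⟨f, s, hfx, hfP⟩ := geometric_hahn_banach_point_closed hconv hclosed hxP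
  obtain ⟨g, rfl⟩ := exists_eq_dotProductCLM f
  have hs : 0 < -s := by simpa using hfP 0 h0
  have hg : (-s)⁻¹ • g ∈ dualPolytope P := fun p hp => by
    have hp' : s < g ⬝ᵥ p := hfP p hp
    change -1 ≤ p ⬝ᵥ _
    rw [dotProduct_smul, dotProduct_comm, smul_eq_mul, inv_mul_eq_div, le_div_iff₀ hs]
    linarith
  have hx' : -1 ≤ ((-s)⁻¹ • g) ⬝ᵥ x := hx _ hg
  rw [smul_dotProduct, smul_eq_mul, inv_mul_eq_div, le_div_iff₀ hs] at hx'
  rw [dotProductCLM_apply] at hfx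
  linarith

namespace IsLatticePolytope

variable {P : Set (Fin n → ℝ)} (hP : IsLatticePolytope P)
include hP

lemma isCompact : IsCompact P := by
  obtain ⟨V, hV, -, rfl⟩ := hP
  exact hV.isCompact_convexHull ℝ

lemma convex : Convex ℝ P := by
  obtain ⟨V, -, -, rfl⟩ := hP
  exact convex_convexHull ℝ V

lemma isLatticePt_of_mem_extremePoints {v : Fin n → ℝ} (hv : v ∈ P.extremePoints ℝ) :
    IsLatticePt v := by
  obtain ⟨V, -, hV, rfl⟩ := hP
  exact hV v (extremePoints_convexHull_subset hv)

lemma convexHull_extremePoints : convexHull ℝ (P.extremePoints ℝ) = P := by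
  have hfin : (P.extremePoints ℝ).Finite := by
    obtain ⟨V, hV, -, rfl⟩ := hP
    exact hV.subset extremePoints_convexHull_subset
  rw [← (hfin.isClosed_convexHull ℝ).closure_eq]
  exact closure_convexHull_extremePoints hP.isCompact hP.convex

end IsLatticePolytope

lemma isExtreme_and_nonempty_toExposed {K : Set (Fin n → ℝ)} (hK : IsCompact K)
    (hne : K.Nonempty) (l : StrongDual ℝ (Fin n → ℝ)) :
    IsExtreme ℝ K (l.toExposed K) ∧ IsCompact (l.toExposed K) ∧ (l.toExposed K).Nonempty := by
  have hexp : IsExposed ℝ K (l.toExposed K) := ContinuousLinearMap.toExposed.isExposed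
  obtain ⟨v, hv, hmax⟩ := hK.exists_isMaxOn hne l.continuous.continuousOn
  exact ⟨hexp.isExtreme, hexp.isCompact hK, v, hv, fun p hp => hmax hp⟩

lemma exists_extremePoint_lex_max {K : Set (Fin n → ℝ)} (hK : IsCompact K) (hne : K.Nonempty)
    (f g : StrongDual ℝ (Fin n → ℝ)) :
    ∃ v ∈ K.extremePoints ℝ, (∀ p ∈ K, f p ≤ f v) ∧ ∀ p ∈ K, f p = f v → g p ≤ g v := by
  obtain ⟨hF, hFc, hFne⟩ := isExtreme_and_nonempty_toExposed hK hne f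
  obtain ⟨hG, hGc, hGne⟩ := isExtreme_and_nonempty_toExposed hFc hFne g
  obtain ⟨v, hv⟩ := hGc.extremePoints_nonempty hGne
  obtain ⟨⟨-, hfv⟩, hgv⟩ := hv.1
  refine ⟨v, (hF.trans hG).extremePoints_subset_extremePoints hv, hfv, fun p hp hfp => ?_⟩
  exact hgv p ⟨hp, fun q hq => (hfv q hq).trans_eq hfp.symm⟩

lemma card_le_of_affineIndependent {ι : Type*} [Fintype ι] {q : ι → Fin n → ℝ}
    (hq : AffineIndependent ℝ q) {g : Fin n → ℝ} {c : ℝ} (hc : c ≠ 0)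
    (hg : ∀ i, g ⬝ᵥ q i = c) : Fintype.card ι ≤ n := by
  have hlin : LinearIndependent ℝ q := by
    refine Fintype.linearIndependent_iff.2 fun a ha i => ?_
    have hsum : ∑ i, a i = 0 := by
      have h := congrArg (g ⬝ᵥ ·) ha
      simpa [dotProduct_sum, dotProduct_smul, hg, ← Finset.sum_mul, hc] using h
    exact affineIndependent_iff.1 hq Finset.univ a hsum ha i (Finset.mem_univ i)
  simpa using hlin.fintype_card_le_finrank

lemma finrank_vectorSpan_le_of_dotProduct_eq {a b : Fin n → ℝ} (hab : LinearIndependent ℝ ![a, b])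
    {F : Set (Fin n → ℝ)} {α β : ℝ} (ha : ∀ p ∈ F, a ⬝ᵥ p = α) (hb : ∀ p ∈ F, b ⬝ᵥ p = β) :
    Module.finrank ℝ (vectorSpan ℝ F) ≤ n - 2 := by
  set A : Matrix (Fin 2) (Fin n) ℝ := Matrix.of ![a, b]
  have hker : vectorSpan ℝ F ≤ LinearMap.ker A.mulVecLin := by
    rw [vectorSpan, Submodule.span_le]
    rintro _ ⟨p, hp, q, hq, rfl⟩
    refine funext fun i => ?_
    fin_cases i <;> simp [A, Matrix.mulVec, dotProduct_sub, ha p hp, ha q hq, hb p hp, hb q hq]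
  have hrank : A.rank = 2 := by simpa using LinearIndependent.rank_matrix (M := A) hab
  have hnullity := A.mulVecLin.finrank_range_add_finrank_ker
  change A.rank + _ = _ at hnullity
  rw [hrank, Module.finrank_fin_fun] at hnullity
  have := Submodule.finrank_mono hker
  omega

end ConvexGeometry

section Polyhedra

open scoped Topology

variable {n : ℕ}

/-- The inclusion of the lattice `ℤ^n` into `ℝ^n`. -/
def toReal : (Fin n → ℤ) →+ (Fin n → ℝ) :=
  (Int.castAddHom ℝ).compLeft (Fin n)

lemma toReal_dotProduct (x y : Fin n → ℤ) : toReal x ⬝ᵥ toReal y = ((x ⬝ᵥ y : ℤ) : ℝ) := by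
  simp [toReal, dotProduct]

lemma toReal_injective : Function.Injective (toReal : (Fin n → ℤ) →+ (Fin n → ℝ)) :=
  fun _ _ h => funext fun i => Int.cast_injective (congrFun h i)

lemma isLatticePt_toReal (x : Fin n → ℤ) : IsLatticePt (toReal x) := fun i => ⟨x i, rfl⟩

lemma IsLatticePt.exists_toReal {x : Fin n → ℝ} (hx : IsLatticePt x) : ∃ m, toReal m = x := by
  choose m hm using hx
  exact ⟨m, funext fun i => (hm i).symm⟩

/-- The polyhedron cut out by the inequalities `⟨u, x⟩ ≥ -1` for the integral normals `u ∈ U`. -/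
def polyhedron (U : Set (Fin n → ℤ)) : Set (Fin n → ℝ) :=
  {x | ∀ u ∈ U, -1 ≤ toReal u ⬝ᵥ x}

/-- The lattice points of `polyhedron U`, in integral coordinates. -/
def latticePoints (U : Set (Fin n → ℤ)) : Set (Fin n → ℤ) :=
  {x | ∀ u ∈ U, -1 ≤ u ⬝ᵥ x}

lemma exists_eq_polyhedron {P : Set (Fin n → ℝ)} (hP : IsReflexive P) :
    ∃ U : Set (Fin n → ℤ), U.Finite ∧ P = polyhedron U := by
  obtain ⟨hlat, h0, W, hWfin, hW, hdual⟩ := hP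
  refine ⟨toReal ⁻¹' W, hWfin.preimage toReal_injective.injOn, ?_⟩
  rw [← dualPolytope_dualPolytope hlat.convex hlat.isCompact.isClosed (interior_subset h0), hdual,
    dualPolytope_convexHull]
  refine Set.Subset.antisymm (fun x hx u hu => hx _ hu) fun x hx w hw => ?_
  obtain ⟨u, rfl⟩ := (hW w hw).exists_toReal
  exact hx u hw

variable {U : Set (Fin n → ℤ)}

lemma toReal_mem_polyhedron {x : Fin n → ℤ} : toReal x ∈ polyhedron U ↔ x ∈ latticePoints U :=
  forall₂_congr fun u _ => by rw [toReal_dotProduct]; norm_cast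

lemma toReal_dotProduct_eq_neg_one {u x : Fin n → ℤ} :
    toReal u ⬝ᵥ toReal x = -1 ↔ u ⬝ᵥ x = -1 := by
  rw [toReal_dotProduct]
  norm_cast

lemma zero_mem_polyhedron : 0 ∈ polyhedron U := fun u _ => by simp

lemma zero_mem_interior_polyhedron (hU : U.Finite) : 0 ∈ interior (polyhedron U) := by
  refine mem_interior_iff_mem_nhds.2 ((hU.eventually_all).2 fun u _ => ?_)
  have hcont : ContinuousAt (toReal u ⬝ᵥ ·) 0 := (dotProductCLM (toReal u)).continuous.continuousAt
  exact (hcont.eventually_const_lt (by simp)).mono fun _ h => h.le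

lemma eq_zero_of_forall_dotProduct_nonneg (hP : IsCompact (polyhedron U)) {x : Fin n → ℤ}
    (hx : ∀ u ∈ U, 0 ≤ u ⬝ᵥ x) : x = 0 := by
  obtain ⟨p, hp, hmax⟩ := hP.exists_isMaxOn ⟨0, zero_mem_polyhedron⟩
    (dotProductCLM (toReal x)).continuous.continuousOn
  have hmem : p + toReal x ∈ polyhedron U := fun u hu => by
    have hux : (0 : ℝ) ≤ toReal u ⬝ᵥ toReal x := by rw [toReal_dotProduct]; exact_mod_cast hx u hu
    rw [dotProduct_add]
    linarith [hp u hu]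
  have hle : toReal x ⬝ᵥ (p + toReal x) ≤ toReal x ⬝ᵥ p := hmax hmem
  rw [dotProduct_add, toReal_dotProduct] at hle
  have hself : x ⬝ᵥ x ≤ 0 := by exact_mod_cast (by linarith : ((x ⬝ᵥ x : ℤ) : ℝ) ≤ 0)
  by_contra hne
  exact hself.not_gt (by simpa using Matrix.dotProduct_self_star_pos_iff.2 hne)

lemma eventually_add_smul_mem (hU : U.Finite) {p d : Fin n → ℝ} (hp : p ∈ polyhedron U)
    (hd : ∀ u ∈ U, toReal u ⬝ᵥ p = -1 → 0 ≤ toReal u ⬝ᵥ d) :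
    ∀ᶠ ε : ℝ in 𝓝[>] 0, p + ε • d ∈ polyhedron U := by
  refine (hU.eventually_all).2 fun u hu => ?_
  simp only [dotProduct_add, dotProduct_smul, smul_eq_mul]
  rcases (hp u hu).lt_or_eq with hlt | heq
  · have hcont : Continuous fun ε : ℝ => toReal u ⬝ᵥ p + ε * (toReal u ⬝ᵥ d) := by fun_prop
    have hev : ∀ᶠ ε : ℝ in 𝓝 0, -1 < toReal u ⬝ᵥ p + ε * (toReal u ⬝ᵥ d) :=
      hcont.continuousAt.eventually_const_lt (by simpa using hlt)
    exact (hev.filter_mono nhdsWithin_le_nhds).mono fun ε h => h.le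
  · filter_upwards [self_mem_nhdsWithin] with ε hε
    have := mul_nonneg (le_of_lt hε) (hd u hu heq.symm)
    linarith

lemma exists_tight_of_mem_extremePoints (hU : U.Finite) {v : Fin n → ℝ}
    (hv : v ∈ (polyhedron U).extremePoints ℝ) {d : Fin n → ℝ} (hd : d ≠ 0) :
    ∃ u ∈ U, toReal u ⬝ᵥ v = -1 ∧ toReal u ⬝ᵥ d ≠ 0 := by
  by_contra! hker
  have hright := eventually_add_smul_mem hU hv.1 fun u hu ht => (hker u hu ht).ge
  have hleft := eventually_add_smul_mem hU hv.1 (d := -d) fun u hu ht => by simp [hker u hu ht]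
  obtain ⟨ε, ⟨h₁, h₂⟩, hε⟩ := ((hright.and hleft).and self_mem_nhdsWithin).exists
  have hmid : v ∈ openSegment ℝ (v + ε • d) (v + ε • -d) :=
    ⟨1 / 2, 1 / 2, by norm_num, by norm_num, by norm_num, by module⟩
  have hεd : ε • d = 0 := by simpa using hv.2 h₁ h₂ hmid
  exact (smul_ne_zero (ne_of_gt hε) hd) hεd

/-- The locus in `polyhedron U` where the inequalities with normals `η` and `μ` are both tight,
a face of codimension at least two if `η ≠ μ` are in `U`. -/
def ridge (U : Set (Fin n → ℤ)) (η μ : Fin n → ℤ) : Set (Fin n → ℝ) :=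
  {p ∈ polyhedron U | toReal η ⬝ᵥ p = -1 ∧ toReal μ ⬝ᵥ p = -1}

lemma toReal_mem_ridge {η μ x : Fin n → ℤ} :
    toReal x ∈ ridge U η μ ↔ x ∈ latticePoints U ∧ η ⬝ᵥ x = -1 ∧ μ ⬝ᵥ x = -1 :=
  and_congr toReal_mem_polyhedron
    (and_congr toReal_dotProduct_eq_neg_one toReal_dotProduct_eq_neg_one)

lemma isExposed_ridge {η μ : Fin n → ℤ} (hη : η ∈ U) (hμ : μ ∈ U) :
    IsExposed ℝ (polyhedron U) (ridge U η μ) := by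
  rintro ⟨p₀, hp₀, hη₀, hμ₀⟩
  refine ⟨dotProductCLM (-(toReal η + toReal μ)), Set.ext fun p => and_congr_right fun hp => ?_⟩
  simp only [dotProductCLM_apply, neg_dotProduct, add_dotProduct, neg_le_neg_iff]
  constructor
  · rintro ⟨hηp, hμp⟩ q hq
    linarith [hq η hη, hq μ hμ]
  · intro hmin
    have := hmin p₀ hp₀
    constructor <;> linarith [hp η hη, hp μ hμ]

lemma linearIndependent_toReal_of_tight {η μ x : Fin n → ℤ} (hne : η ≠ μ)
    (hη : η ⬝ᵥ x = -1) (hμ : μ ⬝ᵥ x = -1) : LinearIndependent ℝ ![toReal η, toReal μ] := by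
  refine LinearIndependent.pair_iff.2 fun s t hst => ?_
  have hdot := congrArg (· ⬝ᵥ toReal x) hst
  simp only [add_dotProduct, smul_dotProduct, toReal_dotProduct_eq_neg_one.2 hη,
    toReal_dotProduct_eq_neg_one.2 hμ, smul_eq_mul, zero_dotProduct] at hdot
  obtain rfl : t = -s := by linarith
  have hs : s • (toReal η - toReal μ) = 0 := by rw [← hst]; module
  have : s = 0 := (smul_eq_zero.1 hs).resolve_right (sub_ne_zero.2 (toReal_injective.ne hne))
  simp [this]

lemma toReal_mem_skeletonLattice {η μ x : Fin n → ℤ} (hx : x ∈ latticePoints U) (hη : η ∈ U)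
    (hμ : μ ∈ U) (hne : η ≠ μ) (hηx : η ⬝ᵥ x = -1) (hμx : μ ⬝ᵥ x = -1) :
    toReal x ∈ skeletonLattice (polyhedron U) (n - 2) :=
  AddSubgroup.subset_closure ⟨isLatticePt_toReal x, _, isExposed_ridge hη hμ,
    finrank_vectorSpan_le_of_dotProduct_eq (linearIndependent_toReal_of_tight hne hηx hμx)
      (fun _ hp => hp.2.1) (fun _ hp => hp.2.2),
    toReal_mem_ridge.2 ⟨hx, hηx, hμx⟩⟩

lemma exists_tight_dotProduct_neg_of_lex_max (hU : U.Finite) {η μ : Fin n → ℤ}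
    {v g d : Fin n → ℝ} (hv : v ∈ ridge U η μ) (hd : d ≠ 0) (hηd : toReal η ⬝ᵥ d = 0)
    (hμd : toReal μ ⬝ᵥ d = 0) (hgd : 0 ≤ g ⬝ᵥ d) (hg : ∀ p ∈ ridge U η μ, g ⬝ᵥ p ≤ g ⬝ᵥ v)
    (hdmax : ∀ p ∈ ridge U η μ, g ⬝ᵥ p = g ⬝ᵥ v → d ⬝ᵥ p ≤ d ⬝ᵥ v) :
    ∃ u ∈ U, toReal u ⬝ᵥ v = -1 ∧ toReal u ⬝ᵥ d < 0 := by
  by_contra! hd_nonneg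
  obtain ⟨hvP, hηv, hμv⟩ := hv
  obtain ⟨ε, hmem, hε : 0 < ε⟩ :=
    ((eventually_add_smul_mem hU hvP hd_nonneg).and self_mem_nhdsWithin).exists
  have hstep (c : Fin n → ℝ) : c ⬝ᵥ (v + ε • d) = c ⬝ᵥ v + ε * c ⬝ᵥ d := by
    rw [dotProduct_add, dotProduct_smul, smul_eq_mul]
  have hridge : v + ε • d ∈ ridge U η μ :=
    ⟨hmem, by simp [hstep, hηd, hηv], by simp [hstep, hμd, hμv]⟩
  have hεg : 0 ≤ ε * g ⬝ᵥ d := mul_nonneg hε.le hgd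
  have hεd : 0 < ε * d ⬝ᵥ d := mul_pos hε (by simpa using Matrix.dotProduct_self_star_pos_iff.2 hd)
  have hgle := hg _ hridge
  have hdle := hdmax _ hridge
  rw [hstep] at hgle
  rw [hstep, hstep] at hdle
  linarith [hdle (by linarith)]

lemma exists_ridge_vertex (hU : U.Finite) (hP : IsLatticePolytope (polyhedron U))
    {η μ y g d : Fin n → ℤ} (hη : η ∈ U) (hμ : μ ∈ U) (hy : y ∈ latticePoints U)
    (hηy : η ⬝ᵥ y = -1) (hμy : μ ⬝ᵥ y = -1) (hd : d ≠ 0) (hηd : η ⬝ᵥ d = 0) (hμd : μ ⬝ᵥ d = 0)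
    (hgd : 0 ≤ g ⬝ᵥ d) :
    ∃ v ∈ latticePoints U, η ⬝ᵥ v = -1 ∧ μ ⬝ᵥ v = -1 ∧ g ⬝ᵥ y ≤ g ⬝ᵥ v ∧
      ∃ u ∈ U, u ⬝ᵥ v = -1 ∧ u ⬝ᵥ d < 0 := by
  have hridge := isExposed_ridge hη hμ
  have hyridge : toReal y ∈ ridge U η μ := toReal_mem_ridge.2 ⟨hy, hηy, hμy⟩
  obtain ⟨w, hw, hgw, hdw⟩ := exists_extremePoint_lex_max (hridge.isCompact hP.isCompact)
    ⟨_, hyridge⟩ (dotProductCLM (toReal g)) (dotProductCLM (toReal d))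
  obtain ⟨v, rfl⟩ := (hP.isLatticePt_of_mem_extremePoints
    (hridge.isExtreme.extremePoints_subset_extremePoints hw)).exists_toReal
  have hgy : toReal g ⬝ᵥ toReal y ≤ toReal g ⬝ᵥ toReal v := hgw _ hyridge
  obtain ⟨u, hu, huv, hud⟩ := exists_tight_dotProduct_neg_of_lex_max hU hw.1
    (by simpa using toReal_injective.ne hd) (by simp [toReal_dotProduct, hηd])
    (by simp [toReal_dotProduct, hμd]) (by rw [toReal_dotProduct]; exact_mod_cast hgd) hgw hdw
  obtain ⟨hv, hηv, hμv⟩ := toReal_mem_ridge.1 hw.1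
  rw [toReal_dotProduct] at hud
  rw [toReal_dotProduct, toReal_dotProduct] at hgy
  exact ⟨v, hv, hηv, hμv, by exact_mod_cast hgy, u, hu, toReal_dotProduct_eq_neg_one.1 huv,
    by exact_mod_cast hud⟩

end Polyhedra

section Roots

/-- `x` is a lattice point of `polyhedron U` whose only tight inequality is the one with normal
`η`. For finite `U` these are the roots of `IsRoot`, with the facet replaced by its normal. -/
structure IsRootAt {n : ℕ} (U : Set (Fin n → ℤ)) (x η : Fin n → ℤ) : Prop where
  normal_mem : η ∈ U
  dotProduct_eq : η ⬝ᵥ x = -1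
  dotProduct_nonneg : ∀ u ∈ U, u ≠ η → 0 ≤ u ⬝ᵥ x

/-- Two roots, each of which lies on the hyperplane orthogonal to the normal of the other. -/
structure OrthogonalRoots {n : ℕ} (U : Set (Fin n → ℤ)) (x η z μ : Fin n → ℤ) : Prop where
  left : IsRootAt U x η
  right : IsRootAt U z μ
  left_orthogonal : η ⬝ᵥ z = 0
  right_orthogonal : μ ⬝ᵥ x = 0

/-- The subgroup `Λ` contains every lattice point of `polyhedron U` that is not a root; this is
all that is used about the subgroup generated by the skeleton of codimension two. -/
def ContainsNonRoots {n : ℕ} (U : Set (Fin n → ℤ)) (Λ : AddSubgroup (Fin n → ℤ)) : Prop :=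
  ∀ x ∈ latticePoints U, x ∉ Λ → ∃ η, IsRootAt U x η

variable {n : ℕ} {U : Set (Fin n → ℤ)} {Λ : AddSubgroup (Fin n → ℤ)} {p q u v x z η μ : Fin n → ℤ}

namespace IsRootAt

variable (hx : IsRootAt U x η)
include hx

lemma eq_of_dotProduct_neg (hu : u ∈ U) (hux : u ⬝ᵥ x < 0) : u = η := by
  by_contra hne
  exact hux.not_ge (hx.dotProduct_nonneg u hu hne)

lemma add_zsmul_mem (hp : p ∈ latticePoints U) {k : ℤ} (hk : 0 ≤ k) (hkp : k ≤ η ⬝ᵥ p + 1) :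
    p + k • x ∈ latticePoints U := fun u hu => by
  rw [dotProduct_add, dotProduct_smul, smul_eq_mul]
  rcases eq_or_ne u η with rfl | hne
  · rw [hx.dotProduct_eq]
    linarith
  · linarith [hp u hu, mul_nonneg hk (hx.dotProduct_nonneg u hu hne)]

lemma add_mem (hp : p ∈ latticePoints U) (hηp : 0 ≤ η ⬝ᵥ p) : p + x ∈ latticePoints U := by
  simpa using hx.add_zsmul_mem hp zero_le_one (by linarith)

lemma mem_latticePoints : x ∈ latticePoints U := by
  simpa using hx.add_mem (p := 0) (fun u _ => by simp) (by simp)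

end IsRootAt

lemma containsNonRoots_comap_skeletonLattice (hP : IsCompact (polyhedron U)) :
    ContainsNonRoots U ((skeletonLattice (polyhedron U) (n - 2)).comap toReal) := by
  intro x hx hxΛ
  have hx0 : x ≠ 0 := by
    rintro rfl
    exact hxΛ (zero_mem _)
  have htight {u : Fin n → ℤ} (hu : u ∈ U) (hneg : u ⬝ᵥ x < 0) : u ⬝ᵥ x = -1 := by
    have := hx u hu
    omega
  obtain ⟨η, hη, hηx⟩ : ∃ u ∈ U, u ⬝ᵥ x < 0 := by
    by_contra! h
    exact hx0 (eq_zero_of_forall_dotProduct_nonneg hP h)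
  refine ⟨η, hη, htight hη hηx, fun u hu hne => ?_⟩
  by_contra! hux
  exact hxΛ (toReal_mem_skeletonLattice hx hu hη hne (htight hu hux) (htight hη hηx))

namespace ContainsNonRoots

variable (hΛ : ContainsNonRoots U Λ)
include hΛ

lemma mem_of_two_tight (hx : x ∈ latticePoints U) (hη : η ∈ U) (hμ : μ ∈ U) (hne : η ≠ μ)
    (hηx : η ⬝ᵥ x = -1) (hμx : μ ⬝ᵥ x = -1) : x ∈ Λ := by
  by_contra hxΛ
  obtain ⟨ν, hν⟩ := hΛ x hx hxΛ
  exact hne ((hν.eq_of_dotProduct_neg hη (by omega)).trans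
    (hν.eq_of_dotProduct_neg hμ (by omega)).symm)

lemma isRootAt_of_notMem (hx : x ∈ latticePoints U) (hxΛ : x ∉ Λ) (hη : η ∈ U)
    (hηx : η ⬝ᵥ x = -1) : IsRootAt U x η := by
  obtain ⟨ν, hν⟩ := hΛ x hx hxΛ
  rwa [hν.eq_of_dotProduct_neg hη (by omega)]

lemma mem_of_mem_extremePoints (hn : 1 < n) (hU : U.Finite)
    (hv : toReal v ∈ (polyhedron U).extremePoints ℝ) : v ∈ Λ := by
  by_contra hvΛ
  obtain ⟨η, hη⟩ := hΛ v (toReal_mem_polyhedron.1 hv.1) hvΛ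
  obtain ⟨d, hd, hd0⟩ := (Submodule.ne_bot_iff _).1 <|
    LinearMap.ker_ne_bot_of_finrank_lt (f := (dotProductCLM (toReal η)).toLinearMap) (by simpa)
  obtain ⟨u, hu, hut, hud⟩ := exists_tight_of_mem_extremePoints hU hv hd0
  have huv := toReal_dotProduct_eq_neg_one.1 hut
  rw [hη.eq_of_dotProduct_neg hu (by omega)] at hud
  exact hud hd

lemma exists_mem_dotProduct_pos (hn : 1 < n) (hU : U.Finite)
    (hP : IsLatticePolytope (polyhedron U)) {g : Fin n → ℤ} (hg : g ≠ 0) :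
    ∃ w ∈ latticePoints U, w ∈ Λ ∧ 0 < g ⬝ᵥ w := by
  have h0 := zero_mem_interior_polyhedron hU
  rw [← hP.convexHull_extremePoints] at h0
  obtain ⟨v, hv, hgv⟩ := exists_mem_dotProduct_pos_of_zero_mem_interior h0
    (g := toReal g) (by simpa using toReal_injective.ne hg)
  obtain ⟨w, rfl⟩ := (hP.isLatticePt_of_mem_extremePoints hv).exists_toReal
  refine ⟨w, toReal_mem_polyhedron.1 hv.1, hΛ.mem_of_mem_extremePoints hn hU hv, ?_⟩
  rw [toReal_dotProduct] at hgv
  exact_mod_cast hgv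

lemma sub_notMem_latticePoints (hx : IsRootAt U x η) (hxΛ : x ∉ Λ) (hv : v ∈ latticePoints U)
    (hμ : μ ∈ U) (hμη : μ ≠ η) (hμv : μ ⬝ᵥ v = -1) (hu : u ∈ U) (huη : u ≠ η) (huv : u ⬝ᵥ v = -1)
    (hne : μ ≠ u) : v - x ∉ latticePoints U := by
  intro hvx
  have htight {a : Fin n → ℤ} (ha : a ∈ U) (haη : a ≠ η) (hav : a ⬝ᵥ v = -1) :
      a ⬝ᵥ (v - x) = -1 := by
    have := hvx a ha
    rw [dotProduct_sub] at this ⊢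
    linarith [hx.dotProduct_nonneg a ha haη]
  have hvΛ := hΛ.mem_of_two_tight hv hμ hu hne hμv huv
  have hvxΛ := hΛ.mem_of_two_tight hvx hμ hu hne (htight hμ hμη hμv) (htight hu huη huv)
  exact hxΛ (by simpa using Λ.sub_mem hvΛ hvxΛ)

lemma exists_isRootAt_of_add_mem (hx : IsRootAt U x η) (hxΛ : x ∉ Λ) (hq : q ∈ latticePoints U)
    (hηq : η ⬝ᵥ q = 1) (hqx : q + x ∈ Λ) : ∃ ν, IsRootAt U q ν ∧ 1 ≤ ν ⬝ᵥ x := by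
  obtain ⟨ν, hν⟩ := hΛ q hq fun h => hxΛ ((Λ.add_mem_cancel_left h).1 hqx)
  have hνq := hν.dotProduct_eq
  have hdot (a : Fin n → ℤ) : a ⬝ᵥ (q + (2 : ℤ) • x) = a ⬝ᵥ q + 2 * a ⬝ᵥ x := by
    rw [dotProduct_add, dotProduct_smul, smul_eq_mul]
  have hq2x : IsRootAt U (q + (2 : ℤ) • x) η := by
    refine hΛ.isRootAt_of_notMem (hx.add_zsmul_mem hq zero_le_two (by omega)) (fun h => hxΛ ?_)
      hx.normal_mem (by rw [hdot, hηq, hx.dotProduct_eq]; norm_num)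
    rw [two_zsmul, ← add_assoc] at h
    exact (Λ.add_mem_cancel_left hqx).1 h
  have hν2 := hq2x.dotProduct_nonneg ν hν.normal_mem fun h => by rw [h] at hνq; omega
  rw [hdot, hνq] at hν2
  exact ⟨ν, hν, by omega⟩

lemma exists_orthogonalRoots (hn : 1 < n) (hU : U.Finite) (hP : IsLatticePolytope (polyhedron U))
    (hx : IsRootAt U x η) (hxΛ : x ∉ Λ) : ∃ z μ, OrthogonalRoots U x η z μ ∧ z ∉ Λ := by
  have hηx := hx.dotProduct_eq
  have hη0 : η ≠ 0 := by
    rintro rfl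
    simp at hηx
  obtain ⟨w, hw, hwΛ, hηw⟩ := hΛ.exists_mem_dotProduct_pos hn hU hP hη0
  obtain ⟨μ, hμ⟩ := hΛ (w + x) (hx.add_mem hw hηw.le) fun h => hxΛ ((Λ.add_mem_cancel_left hwΛ).1 h)
  have hμwx : μ ⬝ᵥ w + μ ⬝ᵥ x = -1 := by rw [← dotProduct_add, hμ.dotProduct_eq]
  have hμη : μ ≠ η := by
    rintro rfl
    linarith
  have hμx_nonneg := hx.dotProduct_nonneg μ hμ.normal_mem hμη
  have hμw_ge := hw μ hμ.normal_mem
  have hμx : μ ⬝ᵥ x = 0 := by linarith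
  have hdot (a : Fin n → ℤ) (k : ℤ) : a ⬝ᵥ (w + k • x) = a ⬝ᵥ w + k * a ⬝ᵥ x := by
    rw [dotProduct_add, dotProduct_smul, smul_eq_mul]
  set z := w + (η ⬝ᵥ w) • x
  have hμz : μ ⬝ᵥ z = -1 := by rw [hdot, hμx]; linarith
  have hηz : η ⬝ᵥ z = 0 := by rw [hdot, hηx]; ring
  have hz : z ∈ latticePoints U := hx.add_zsmul_mem hw hηw.le (by linarith)
  have hzx : z + x ∈ latticePoints U := hx.add_mem hz hηz.ge
  have hzxΛ : z + x ∈ Λ := hΛ.mem_of_two_tight hzx hx.normal_mem hμ.normal_mem hμη.symm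
    (by rw [dotProduct_add, hηz, hηx, zero_add]) (by rw [dotProduct_add, hμz, hμx, add_zero])
  have hzΛ : z ∉ Λ := fun h => hxΛ ((Λ.add_mem_cancel_left h).1 hzxΛ)
  exact ⟨z, μ, ⟨hx, hΛ.isRootAt_of_notMem hz hzΛ hμ.normal_mem hμz, hηz, hμx⟩, hzΛ⟩

end ContainsNonRoots

namespace OrthogonalRoots

variable (O : OrthogonalRoots U x η z μ)
include O

lemma symm : OrthogonalRoots U z μ x η :=
  ⟨O.right, O.left, O.right_orthogonal, O.left_orthogonal⟩

lemma ne : η ≠ μ := by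
  rintro rfl
  have := O.left.dotProduct_eq
  rw [O.right_orthogonal] at this
  norm_num at this

lemma dotProduct_add_left : η ⬝ᵥ (x + z) = -1 := by
  rw [dotProduct_add, O.left.dotProduct_eq, O.left_orthogonal, add_zero]

lemma dotProduct_add_right : μ ⬝ᵥ (x + z) = -1 := by
  rw [dotProduct_add, O.right.dotProduct_eq, O.right_orthogonal, zero_add]

lemma add_mem_latticePoints : x + z ∈ latticePoints U :=
  O.right.add_mem O.left.mem_latticePoints O.right_orthogonal.ge

lemma dotProduct_add_nonneg (hu : u ∈ U) (huη : u ≠ η) (huμ : u ≠ μ) : 0 ≤ u ⬝ᵥ (x + z) := by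
  rw [dotProduct_add]
  exact add_nonneg (O.left.dotProduct_nonneg u hu huη) (O.right.dotProduct_nonneg u hu huμ)

lemma exists_dotProduct_eq (hp : p ∈ latticePoints U) {a b : ℤ} (ha : -1 ≤ a) (hb : -1 ≤ b)
    (hap : a ≤ η ⬝ᵥ p) (hbp : b ≤ μ ⬝ᵥ p) : ∃ q ∈ latticePoints U, η ⬝ᵥ q = a ∧ μ ⬝ᵥ q = b := by
  have hdot (g : Fin n → ℤ) (k l : ℤ) :
      g ⬝ᵥ (p + k • x + l • z) = g ⬝ᵥ p + k * g ⬝ᵥ x + l * g ⬝ᵥ z := by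
    simp only [dotProduct_add, dotProduct_smul, smul_eq_mul]
  have hpx := O.left.add_zsmul_mem hp (k := η ⬝ᵥ p - a) (by linarith) (by linarith)
  have hμpx : μ ⬝ᵥ (p + (η ⬝ᵥ p - a) • x) = μ ⬝ᵥ p := by
    rw [dotProduct_add, dotProduct_smul, O.right_orthogonal, smul_zero, add_zero]
  refine ⟨_, O.right.add_zsmul_mem hpx (k := μ ⬝ᵥ p - b) (by linarith) (by linarith), ?_, ?_⟩
  · rw [hdot, O.left.dotProduct_eq, O.left_orthogonal]
    ring
  · rw [hdot, O.right.dotProduct_eq, O.right_orthogonal]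
    ring

end OrthogonalRoots

end Roots

section Threefolds

open Matrix

lemma smul_eq_smul_cross {R : Type*} [CommRing R] {a b p : Fin 3 → R} (ha : a ⬝ᵥ p = 0)
    (hb : b ⬝ᵥ p = 0) (c : Fin 3 → R) : (c ⬝ᵥ a ⨯₃ b) • p = (c ⬝ᵥ p) • (a ⨯₃ b) := by
  have hp : p ⨯₃ (a ⨯₃ b) = 0 := by
    rw [cross_cross_eq_smul_sub_smul', dotProduct_comm p b, ha, hb, zero_smul, zero_smul, sub_zero]
  have hcp := cross_cross_eq_smul_sub_smul' c p (a ⨯₃ b)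
  rw [hp, map_zero, dotProduct_comm p c] at hcp
  exact sub_eq_zero.1 hcp.symm

variable {U : Set (Fin 3 → ℤ)} {Λ : AddSubgroup (Fin 3 → ℤ)} {x z p q w η μ : Fin 3 → ℤ}

namespace OrthogonalRoots

variable (O : OrthogonalRoots U x η z μ)
include O

lemma cross_dotProduct_cross : x ⨯₃ z ⬝ᵥ η ⨯₃ μ = 1 := by
  rw [cross_dot_cross, dotProduct_comm x, dotProduct_comm z, dotProduct_comm x,
    O.left.dotProduct_eq, O.right.dotProduct_eq, O.right_orthogonal]
  norm_num

lemma cross_ne_zero : η ⨯₃ μ ≠ 0 := fun h => by simpa [h] using O.cross_dotProduct_cross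

lemma eq_smul_cross (hη : η ⬝ᵥ p = 0) (hμ : μ ⬝ᵥ p = 0) :
    p = (x ⨯₃ z ⬝ᵥ p) • (η ⨯₃ μ) := by
  simpa [O.cross_dotProduct_cross] using smul_eq_smul_cross hη hμ (x ⨯₃ z)

lemma add_cross_mem_latticePoints (hU : U.Finite) (hP : IsLatticePolytope (polyhedron U)) :
    x + z + η ⨯₃ μ ∈ latticePoints U := by
  set t := η ⨯₃ μ
  set y := x + z
  have hηt : η ⬝ᵥ t = 0 := dot_self_cross η μ
  have hμt : μ ⬝ᵥ t = 0 := dot_cross_self η μ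
  have hηy : η ⬝ᵥ y = -1 := O.dotProduct_add_left
  have hμy : μ ⬝ᵥ y = -1 := O.dotProduct_add_right
  have hy : y ∈ latticePoints U := O.add_mem_latticePoints
  -- The far end of the edge through `y` in direction `t` is `v = y + T t` with `1 ≤ T`.
  obtain ⟨v, hv, hηv, hμv, -, u, hu, huv, hut⟩ := exists_ridge_vertex (g := 0) hU hP
    O.left.normal_mem O.right.normal_mem hy hηy hμy O.cross_ne_zero hηt hμt (by simp)
  obtain ⟨T, hT⟩ : ∃ T : ℤ, v - y = T • t := ⟨_, O.eq_smul_cross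
    (by rw [dotProduct_sub, hηv, hηy, sub_self]) (by rw [dotProduct_sub, hμv, hμy, sub_self])⟩
  have hdot (a : Fin 3 → ℤ) : a ⬝ᵥ v = a ⬝ᵥ y + T * a ⬝ᵥ t := by
    rw [← sub_eq_iff_eq_add', ← dotProduct_sub, hT, dotProduct_smul, smul_eq_mul]
  have huy : 0 ≤ u ⬝ᵥ y := O.dotProduct_add_nonneg hu
    (by rintro rfl; exact hut.ne hηt) (by rintro rfl; exact hut.ne hμt)
  have hTpos : 1 ≤ T := by
    have := hdot u
    by_contra! hT0
    nlinarith
  intro a ha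
  have hay := hy a ha
  have hav := hv a ha
  rw [hdot] at hav
  rw [dotProduct_add]
  nlinarith

lemma mem_of_orthogonal (hU : U.Finite) (hP : IsLatticePolytope (polyhedron U))
    (hΛ : ContainsNonRoots U Λ) (hη : η ⬝ᵥ p = 0) (hμ : μ ⬝ᵥ p = 0) : p ∈ Λ := by
  have hmem {s : Fin 3 → ℤ} (hs : s ∈ latticePoints U) (hηs : η ⬝ᵥ s = -1) (hμs : μ ⬝ᵥ s = -1) :
      s ∈ Λ := hΛ.mem_of_two_tight hs O.left.normal_mem O.right.normal_mem O.ne hηs hμs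
  have hy : x + z ∈ Λ := hmem O.add_mem_latticePoints O.dotProduct_add_left O.dotProduct_add_right
  have hyt : x + z + η ⨯₃ μ ∈ Λ := hmem (O.add_cross_mem_latticePoints hU hP)
    (by rw [dotProduct_add, O.dotProduct_add_left, dot_self_cross, add_zero])
    (by rw [dotProduct_add, O.dotProduct_add_right, dot_cross_self, add_zero])
  rw [O.eq_smul_cross hη hμ]
  exact Λ.zsmul_mem ((Λ.add_mem_cancel_left hy).1 hyt) _

lemma exists_ne_zero_orthogonal (g : Fin 3 → ℤ) :
    ∃ d ≠ 0, η ⬝ᵥ d = 0 ∧ μ ⬝ᵥ d = 0 ∧ 0 ≤ g ⬝ᵥ d := by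
  rcases le_total 0 (g ⬝ᵥ η ⨯₃ μ) with h | h
  · exact ⟨_, O.cross_ne_zero, dot_self_cross η μ, dot_cross_self η μ, h⟩
  · exact ⟨_, neg_ne_zero.2 O.cross_ne_zero, by simp, by simp,
      by rw [dotProduct_neg]; exact neg_nonneg.2 h⟩

lemma false_of_dotProduct_eq_one_zero (hU : U.Finite) (hP : IsLatticePolytope (polyhedron U))
    (hΛ : ContainsNonRoots U Λ) (hxΛ : x ∉ Λ) (hq : q ∈ latticePoints U) (hηq : η ⬝ᵥ q = 1)
    (hμq : μ ⬝ᵥ q = 0) : False := by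
  set k := q + x with hk
  have hηk : η ⬝ᵥ k = 0 := by rw [dotProduct_add, hηq, O.left.dotProduct_eq]; norm_num
  have hμk : μ ⬝ᵥ k = 0 := by rw [dotProduct_add, hμq, O.right_orthogonal, add_zero]
  have hkΛ : k ∈ Λ := O.mem_of_orthogonal hU hP hΛ hηk hμk
  obtain ⟨ν, hν, hνx⟩ := hΛ.exists_isRootAt_of_add_mem O.left hxΛ hq hηq hkΛ
  have hνq := hν.dotProduct_eq
  have hνμ : ν ≠ μ := by rintro rfl; omega
  have hνk : 0 ≤ ν ⬝ᵥ k := by rw [dotProduct_add]; omega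
  obtain ⟨d, hd0, hηd, hμd, hνd, hkd⟩ :
      ∃ d ≠ 0, η ⬝ᵥ d = 0 ∧ μ ⬝ᵥ d = 0 ∧ 0 ≤ ν ⬝ᵥ d ∧ (k ≠ 0 → d = k) := by
    rcases eq_or_ne k 0 with h | h
    · obtain ⟨d, hd0, hηd, hμd, hνd⟩ := O.exists_ne_zero_orthogonal ν
      exact ⟨d, hd0, hηd, hμd, hνd, absurd h⟩
    · exact ⟨k, h, hηk, hμk, hνk, fun _ => rfl⟩
  obtain ⟨v, hv, hηv, hμv, hνv, u, hu, huv, hud⟩ := exists_ridge_vertex (g := ν) hU hP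
    O.left.normal_mem O.right.normal_mem O.add_mem_latticePoints O.dotProduct_add_left
    O.dotProduct_add_right hd0 hηd hμd hνd
  rw [dotProduct_add] at hνv
  have hνz := O.right.dotProduct_nonneg ν hν.normal_mem hνμ
  have hvq : v + q ∈ latticePoints U := hν.add_mem hv (by omega)
  rcases eq_or_ne k 0 with hk0 | hk0
  · have hvx : v - x ∈ latticePoints U := by
      rwa [eq_neg_of_add_eq_zero_left hk0, ← sub_eq_add_neg] at hvq
    exact hΛ.sub_notMem_latticePoints O.left hxΛ hv O.right.normal_mem O.ne.symm hμv hu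
      (by rintro rfl; omega) huv (by rintro rfl; omega) hvx
  · have hvk : v + q + x ∈ latticePoints U :=
      O.left.add_mem hvq (by rw [dotProduct_add, hηv, hηq]; norm_num)
    have huvk := hvk u hu
    rw [add_assoc, dotProduct_add, huv, ← hk, ← hkd hk0] at huvk
    omega

lemma false_of_dotProduct_pos_nonneg (hU : U.Finite) (hP : IsLatticePolytope (polyhedron U))
    (hΛ : ContainsNonRoots U Λ) (hxΛ : x ∉ Λ) (hw : w ∈ latticePoints U) (hηw : 1 ≤ η ⬝ᵥ w)
    (hμw : 0 ≤ μ ⬝ᵥ w) : False := by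
  obtain ⟨q, hq, hηq, hμq⟩ := O.exists_dotProduct_eq hw (by norm_num) (by norm_num) hηw hμw
  exact O.false_of_dotProduct_eq_one_zero hU hP hΛ hxΛ hq hηq hμq

lemma dotProduct_le_one (hU : U.Finite) (hP : IsLatticePolytope (polyhedron U))
    (hΛ : ContainsNonRoots U Λ) (hxΛ : x ∉ Λ) (hw : w ∈ latticePoints U) : η ⬝ᵥ w ≤ 1 := by
  by_contra! hηw
  have hμ0 : μ ≠ 0 := by
    rintro rfl
    simpa using O.right.dotProduct_eq
  obtain ⟨w', hw', -, hμw'⟩ := hΛ.exists_mem_dotProduct_pos (by norm_num) hU hP hμ0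
  obtain ⟨p, hp, hηp, hμp⟩ :=
    O.exists_dotProduct_eq hw (by norm_num) le_rfl hηw (hw μ O.right.normal_mem)
  obtain ⟨q, hq, hηq, hμq⟩ :=
    O.exists_dotProduct_eq hw' le_rfl (by norm_num) (hw' η O.left.normal_mem) hμw'
  have hpqΛ : p + q ∉ Λ := fun h => hxΛ <| (Λ.add_mem_cancel_left h).1 <|
    O.mem_of_orthogonal hU hP hΛ
      (by simp only [dotProduct_add, hηp, hηq, O.left.dotProduct_eq]; norm_num)
      (by simp only [dotProduct_add, hμp, hμq, O.right_orthogonal]; norm_num)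
  have hpq : p + q ∈ latticePoints U := by
    by_cases hpΛ : p ∈ Λ
    · have hqΛ : q ∉ Λ := fun h => hpqΛ (Λ.add_mem hpΛ h)
      exact (hΛ.isRootAt_of_notMem hq hqΛ O.left.normal_mem hηq).add_mem hp (by omega)
    · rw [add_comm]
      exact (hΛ.isRootAt_of_notMem hp hpΛ O.right.normal_mem hμp).add_mem hq (by omega)
  exact O.false_of_dotProduct_eq_one_zero hU hP hΛ hxΛ hpq
    (by rw [dotProduct_add, hηp, hηq]; norm_num) (by rw [dotProduct_add, hμp, hμq]; norm_num)

end OrthogonalRoots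

lemma ContainsNonRoots.latticePoints_subset (hU : U.Finite) (hP : IsLatticePolytope (polyhedron U))
    (hΛ : ContainsNonRoots U Λ) : latticePoints U ⊆ Λ := by
  intro x hx
  by_contra hxΛ
  obtain ⟨η, hη⟩ := hΛ x hx hxΛ
  obtain ⟨z, μ, O, hzΛ⟩ := hΛ.exists_orthogonalRoots (by norm_num) hU hP hη hxΛ
  have hsum : η + μ ≠ 0 := fun h => by
    simpa [h, O.right_orthogonal, hη.dotProduct_eq] using (add_dotProduct η μ x).symm
  obtain ⟨w, hw, -, hpos⟩ := hΛ.exists_mem_dotProduct_pos (by norm_num) hU hP hsum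
  rw [add_dotProduct] at hpos
  have hηw := O.dotProduct_le_one hU hP hΛ hxΛ hw
  have hμw := O.symm.dotProduct_le_one hU hP hΛ hzΛ hw
  rcases hηw.lt_or_eq with hlt | heq
  · exact O.symm.false_of_dotProduct_pos_nonneg hU hP hΛ hzΛ hw (by omega) (by omega)
  · exact O.false_of_dotProduct_pos_nonneg hU hP hΛ hxΛ hw heq.ge (by omega)

end Threefolds

section Generation

variable {n : ℕ}

section Simplex

variable {ι : Type*} [Fintype ι] {q : ι → Fin n → ℤ} {Λ : AddSubgroup (Fin n → ℤ)}
  (hΛ : ∀ p, toReal p ∈ convexHull ℝ (Set.range (toReal ∘ q)) → p ∈ Λ) {c : ι → ℝ}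
  {m : Fin n → ℤ} (hm : ∑ i, c i • toReal (q i) = toReal m)
include hΛ hm

lemma mem_of_sum_eq_one (hc0 : ∀ i, 0 ≤ c i) (hc1 : ∑ i, c i = 1) : m ∈ Λ :=
  hΛ m <| hm ▸ (convex_convexHull ℝ _).sum_mem (fun i _ => hc0 i) hc1
    fun i _ => subset_convexHull ℝ _ (Set.mem_range_self i)

-- For `∑ c = 2` the coefficients `1 - c i` sum to one, and they represent `∑ q i - m`.
lemma mem_of_sum_eq_int_of_lt_one (hι : Fintype.card ι ≤ 3) (hc0 : ∀ i, 0 ≤ c i)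
    (hc1 : ∀ i, c i < 1) {k : ℤ} (hk : ∑ i, c i = k) : m ∈ Λ := by
  have hk0 : 0 ≤ k := by exact_mod_cast hk ▸ Finset.sum_nonneg fun i _ => hc0 i
  rcases hk0.eq_or_lt with rfl | hkpos
  · have hc : ∀ i, c i = 0 := by
      simpa [Finset.sum_eq_zero_iff_of_nonneg, hc0] using hk
    have hm0 : m = 0 := toReal_injective (by simpa [hc] using hm.symm)
    exact hm0 ▸ Λ.zero_mem
  have hne : (Finset.univ : Finset ι).Nonempty := by
    by_contra! hempty
    rw [hempty, Finset.sum_empty] at hk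
    exact hkpos.ne (by exact_mod_cast hk)
  have hklt : k < Fintype.card ι := by
    have hlt := Finset.sum_lt_sum_of_nonempty hne fun i _ => hc1 i
    rw [hk, Finset.sum_const, nsmul_one, Finset.card_univ] at hlt
    exact_mod_cast hlt
  obtain rfl | ⟨rfl, hcard⟩ : k = 1 ∨ k = 2 ∧ Fintype.card ι = 3 := by omega
  · exact mem_of_sum_eq_one hΛ hm hc0 (by simpa using hk)
  have hcompl : ∑ i, (1 - c i) • toReal (q i) = toReal (∑ i, q i - m) := by
    simp only [sub_smul, one_smul, Finset.sum_sub_distrib, hm, map_sub, map_sum]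
  have hmem := mem_of_sum_eq_one hΛ hcompl (fun i => sub_nonneg.2 (hc1 i).le) (by
    rw [Finset.sum_sub_distrib, hk, Finset.sum_const, nsmul_one, Finset.card_univ, hcard]
    norm_num)
  have hq : ∑ i, q i ∈ Λ :=
    Λ.sum_mem fun i _ => hΛ _ (subset_convexHull ℝ _ (Set.mem_range_self i))
  simpa using Λ.sub_mem hq hmem

lemma mem_of_sum_eq_int (hι : Fintype.card ι ≤ 3) {k : ℤ} (hk : ∑ i, c i = k) : m ∈ Λ := by
  have hfloor : ∑ i, ⌊c i⌋ • q i ∈ Λ :=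
    Λ.sum_mem fun i _ => Λ.zsmul_mem (hΛ _ (subset_convexHull ℝ _ (Set.mem_range_self i))) _
  have hfract : ∑ i, Int.fract (c i) • toReal (q i) = toReal (m - ∑ i, ⌊c i⌋ • q i) := by
    simp only [Int.fract, sub_smul, Finset.sum_sub_distrib, hm, map_sub, map_sum, map_zsmul,
      Int.cast_smul_eq_zsmul]
  have hrest := mem_of_sum_eq_int_of_lt_one hΛ hfract hι (fun i => Int.fract_nonneg _)
    (fun i => Int.fract_lt_one _) (k := k - ∑ i, ⌊c i⌋)
    (by simp only [Int.fract, Finset.sum_sub_distrib, hk]; push_cast; ring)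
  simpa using Λ.add_mem hrest hfloor

end Simplex

variable {U : Set (Fin n → ℤ)}

lemma convex_polyhedron : Convex ℝ (polyhedron U) := fun _ hp _ hq _ _ ha hb hab u hu =>
  convex_dotProduct_ge (toReal u) (-1) (hp u hu) (hq u hu) ha hb hab

lemma exists_inv_smul_mem_polyhedron (hU : U.Finite) (hP : IsCompact (polyhedron U))
    {m : Fin n → ℤ} (hm : m ≠ 0) :
    ∃ η ∈ U, η ⬝ᵥ m < 0 ∧ (-(η ⬝ᵥ m : ℤ) : ℝ)⁻¹ • toReal m ∈ polyhedron U := by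
  obtain ⟨u₀, hu₀, hneg⟩ : ∃ u ∈ U, u ⬝ᵥ m < 0 := by
    by_contra! h
    exact hm (eq_zero_of_forall_dotProduct_nonneg hP h)
  obtain ⟨η, hη, hmin⟩ := Set.exists_min_image U (· ⬝ᵥ m) hU ⟨u₀, hu₀⟩
  have hηm : η ⬝ᵥ m < 0 := (hmin u₀ hu₀).trans_lt hneg
  refine ⟨η, hη, hηm, fun u hu => ?_⟩
  have hpos : (0 : ℝ) < -(η ⬝ᵥ m : ℤ) := by exact_mod_cast neg_pos.2 hηm
  rw [dotProduct_smul, toReal_dotProduct, smul_eq_mul, inv_mul_eq_div, le_div_iff₀ hpos]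
  have : ((η ⬝ᵥ m : ℤ) : ℝ) ≤ (u ⬝ᵥ m : ℤ) := by exact_mod_cast hmin u hu
  linarith

lemma dotProduct_eq_of_sum_smul_eq {ι : Type*} [Fintype ι] {g : Fin n → ℝ} {b : ℝ}
    {q : ι → Fin n → ℝ} (hq : ∀ i, b ≤ g ⬝ᵥ q i) {w : ι → ℝ} (hw : ∀ i, 0 < w i)
    (hw1 : ∑ i, w i = 1) (hb : g ⬝ᵥ ∑ i, w i • q i = b) (i : ι) : g ⬝ᵥ q i = b := by
  have hsum : ∑ j, w j * b = ∑ j, w j * g ⬝ᵥ q j := by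
    rw [← Finset.sum_mul, hw1, one_mul, ← hb]
    simp only [dotProduct_sum, dotProduct_smul, smul_eq_mul]
  have heq := (Finset.sum_eq_sum_iff_of_le fun j _ =>
    mul_le_mul_of_nonneg_left (hq j) (hw j).le).1 hsum i (Finset.mem_univ i)
  exact (mul_left_cancel₀ (hw i).ne' heq).symm

lemma mem_of_latticePoints_subset (hn : n ≤ 3) (hU : U.Finite)
    (hP : IsLatticePolytope (polyhedron U)) {Λ : AddSubgroup (Fin n → ℤ)}
    (hΛ : latticePoints U ⊆ Λ) (m : Fin n → ℤ) : m ∈ Λ := by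
  rcases eq_or_ne m 0 with rfl | hm
  · exact Λ.zero_mem
  obtain ⟨η, hη, hηm, hmem⟩ := exists_inv_smul_mem_polyhedron hU hP.isCompact hm
  have hs : (-(η ⬝ᵥ m : ℤ) : ℝ) ≠ 0 := by exact_mod_cast (neg_pos.2 hηm).ne'
  rw [← hP.convexHull_extremePoints] at hmem
  obtain ⟨ι, _, z, w, hz, hindep, hw, hw1, hwm⟩ := eq_pos_convex_span_of_mem_convexHull hmem
  have hzV (i : ι) : z i ∈ (polyhedron U).extremePoints ℝ := hz (Set.mem_range_self i)
  choose q hq using fun i => (hP.isLatticePt_of_mem_extremePoints (hzV i)).exists_toReal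
  obtain rfl : toReal ∘ q = z := funext hq
  have hfacet (i : ι) : toReal η ⬝ᵥ (toReal ∘ q) i = -1 := by
    refine dotProduct_eq_of_sum_smul_eq (fun j => (hzV j).1 η hη) hw hw1 ?_ i
    rw [hwm, dotProduct_smul, toReal_dotProduct, smul_eq_mul, inv_neg, neg_mul,
      inv_mul_cancel₀ (neg_ne_zero.1 hs)]
  have hι := (card_le_of_affineIndependent hindep (by norm_num) hfacet).trans hn
  have hhull : convexHull ℝ (Set.range (toReal ∘ q)) ⊆ polyhedron U :=
    convexHull_min (Set.range_subset_iff.2 fun i => (hzV i).1) convex_polyhedron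
  refine mem_of_sum_eq_int (c := fun i => -(η ⬝ᵥ m : ℤ) * w i) (k := -(η ⬝ᵥ m))
    (fun p hp => hΛ (toReal_mem_polyhedron.1 (hhull hp))) ?_ hι ?_
  · simp only [mul_smul, ← Finset.smul_sum]
    exact (congrArg _ hwm).trans (smul_inv_smul₀ hs _)
  · rw [← Finset.mul_sum, hw1]
    push_cast
    ring

end Generation

/-- For a `3`-dimensional reflexive polytope `P ⊆ ℝ³`, the lattice points on the
`1`-skeleton of `P` (edges and vertices) generate the full lattice `ℤ³`: `Λ₁ = ℤ³`. -/
theorem reflexive_threefold_one_skeleton_generates (P : Set (Fin 3 → ℝ))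
    (hP : IsReflexive P) :
    skeletonLattice P 1 = latticeSubgroup 3 := by
  obtain ⟨U, hU, rfl⟩ := exists_eq_polyhedron hP
  have hlat : IsLatticePolytope (polyhedron U) := hP.1
  refine le_antisymm (AddSubgroup.closure_mono fun x hx => hx.1)
    ((AddSubgroup.closure_le _).2 fun x hx => ?_)
  obtain ⟨m, rfl⟩ := IsLatticePt.exists_toReal hx
  have hnonroots := containsNonRoots_comap_skeletonLattice hlat.isCompact
  exact mem_of_latticePoints_subset le_rfl hU hlat (hnonroots.latticePoints_subset hU hlat) m
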